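/- Let n ≥ 4, let 0 < Z ≤ 2^n and set a = ⌊log_2 Z⌋. Let s and c be integers with 2^n - 2^s < c < 2^n - 2^{s-1} and s > a. Then the number of 2^n-periodic binary sequences S with odd Hamming weight in one period, L_1(S) = c, and L_{1;Z}(S) = 2^n - 2^a is exactly 2^{c - 1 + s} - Z · 2^{c + s - a - 2}. -/

import Mathlib

/-- Generating polynomial `S^N(x) = s_0 + s_1 x + ... + s_{N-1} x^{N-1}` of one period
of an `N`-periodic binary sequence. -/
noncomputable def genPoly {N : ℕ} (S : Fin N → ZMod 2) : Polynomial (ZMod 2) :=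
  ∑ i : Fin N, Polynomial.C (S i) * Polynomial.X ^ (i : ℕ)

/-- Linear complexity `L(S) = N - deg (gcd (1 - x^N, S^N(x)))`. -/
noncomputable def linComp {N : ℕ} (S : Fin N → ZMod 2) : ℕ :=
  N - (EuclideanDomain.gcd (1 - Polynomial.X ^ N) (genPoly S)).natDegree

/-- Hamming weight of one period of an `N`-periodic binary sequence. -/
def wt {N : ℕ} (T : Fin N → ZMod 2) : ℕ :=
  (Finset.univ.filter (fun i => T i ≠ 0)).card

/-- `k`-error linear complexity `L_{N,k}(S)`. -/
noncomputable def errLC {N : ℕ} (S : Fin N → ZMod 2) (k : ℕ) : ℕ :=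
  sInf {c | ∃ T : Fin N → ZMod 2, wt T ≤ k ∧ linComp (S + T) = c}

/-- `k`-error linear complexity with a zone of length `Z`: `L_{N,k;Z}(S)`. -/
noncomputable def errLCZone {N : ℕ} (S : Fin N → ZMod 2) (k Z : ℕ) : ℕ :=
  sInf {c | ∃ T : Fin N → ZMod 2, wt T ≤ k ∧ (∀ i : Fin N, Z ≤ (i : ℕ) → T i = 0) ∧
    linComp (S + T) = c}

/-- `E_1(j)`: the sequence whose only nonzero term in one period is a `1` at position `j`. -/
def E1 {N : ℕ} (j : Fin N) : Fin N → ZMod 2 :=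
  fun i => if i = j then 1 else 0

open Polynomial in
lemma aux_dvd_of_modEq {r i j : ℕ} (h : i ≡ j [MOD 2^r]) :
    ((X - 1 : (ZMod 2)[X])^(2^r)) ∣ X^i - X^j := by
  have key : ∀ i j : ℕ, i ≤ j → i ≡ j [MOD 2^r] →
      ((X - 1 : (ZMod 2)[X])^(2^r)) ∣ X^j - X^i := by
    intro i j hij h
    obtain ⟨d, hd⟩ := (Nat.modEq_iff_dvd' hij).1 h
    have hj : j = i + 2^r * d := by omega
    have e : (X : (ZMod 2)[X])^j - X^i = X^i * ((X^(2^r))^d - 1) := by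
      rw [hj, pow_add, pow_mul]; ring
    have e2 : (X - 1 : (ZMod 2)[X])^(2^r) = X^(2^r) - 1 := by
      rw [sub_pow_char_pow, one_pow]
    rw [e, e2]
    apply Dvd.dvd.mul_left
    simpa using sub_dvd_pow_sub_pow (X^(2^r) : (ZMod 2)[X]) 1 d
  rcases le_total i j with hij | hij
  · rw [dvd_sub_comm]; exact key i j hij h
  · exact key j i hij h.symm

open Polynomial in
lemma aux_modEq_of_dvd {r m i j : ℕ} (hm : ∀ v, v < r → 2^v < m)
    (h : ((X - 1 : (ZMod 2)[X])^m) ∣ X^i - X^j) : i ≡ j [MOD 2^r] := by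
  have key : ∀ i j : ℕ, i ≤ j → ((X - 1 : (ZMod 2)[X])^m) ∣ X^j - X^i → i ≡ j [MOD 2^r] := by
    intro i j hij h
    rw [Nat.modEq_iff_dvd' hij]
    obtain ⟨d, rfl⟩ := Nat.exists_eq_add_of_le hij
    rw [Nat.add_sub_cancel_left]
    by_cases hd : d = 0
    · simp [hd]
    obtain ⟨v, u, hu, hvu⟩ := Nat.exists_eq_two_pow_mul_odd hd
    by_cases hvr : r ≤ v
    · rw [hvu]; exact Dvd.dvd.mul_right (pow_dvd_pow 2 hvr) u
    exfalso
    have hvm := hm v (by omega)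
    obtain ⟨g, hg⟩ : (X - 1 : (ZMod 2)[X]) ∣ X^u - 1 := by
      simpa using sub_dvd_pow_sub_pow (X : (ZMod 2)[X]) 1 u
    have hg' : g = ∑ k ∈ Finset.range u, X^k := by
      have h0 : (X - 1 : (ZMod 2)[X]) ≠ 0 := by
        simpa using X_sub_C_ne_zero (1 : ZMod 2)
      apply mul_left_cancel₀ h0
      rw [← hg, mul_geom_sum]
    have hg1 : g.eval 1 = 1 := by
      rw [hg', eval_finset_sum]
      simp
      exact (ZMod.natCast_eq_one_iff_odd).2 hu
    have e : (X : (ZMod 2)[X])^(i+d) - X^i = (X-1)^(2^v) * (X^i * g^(2^v)) := by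
      have : (X : (ZMod 2)[X])^d - 1 = ((X-1) * g)^(2^v) := by
        rw [← hg, sub_pow_char_pow, one_pow, ← pow_mul, hvu, mul_comm]
      rw [pow_add]
      calc (X : (ZMod 2)[X])^i * X^d - X^i = X^i * (X^d - 1) := by ring
        _ = _ := by rw [this, mul_pow]; ring
    rw [e] at h
    have h' := (pow_dvd_pow (X - 1 : (ZMod 2)[X]) hvm).trans h
    rw [pow_succ] at h'
    have h0 : (X - 1 : (ZMod 2)[X]) ≠ 0 := by
      simpa using X_sub_C_ne_zero (1 : ZMod 2)
    have h2 := (mul_dvd_mul_iff_left (pow_ne_zero _ h0)).1 h'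
    obtain ⟨q, hq⟩ := h2
    have := congrArg (eval 1) hq
    simp [hg1] at this
  rcases le_total i j with hij | hij
  · rw [dvd_sub_comm] at h; exact key i j hij h
  · exact (key j i hij h).symm

open Polynomial in
lemma aux_linComp {n m : ℕ} (hm : m ≤ 2^n) (S : Fin (2^n) → ZMod 2) :
    linComp S ≤ 2^n - m ↔ (X - 1 : (ZMod 2)[X])^m ∣ genPoly S := by
  unfold linComp
  have e2 : (1 - X^(2^n) : (ZMod 2)[X]) = (X - 1)^(2^n) := by
    rw [sub_pow_char_pow, one_pow, CharTwo.sub_eq_add, CharTwo.sub_eq_add, add_comm]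
  rw [e2]
  have hirr : Prime (X - 1 : (ZMod 2)[X]) := by
    simpa using prime_X_sub_C (1 : ZMod 2)
  obtain ⟨d, hd, hass⟩ := (dvd_prime_pow hirr _).1
    (EuclideanDomain.gcd_dvd_left ((X - 1 : (ZMod 2)[X])^(2^n)) (genPoly S))
  have hdeg : (EuclideanDomain.gcd ((X - 1 : (ZMod 2)[X])^(2^n)) (genPoly S)).natDegree = d := by
    rw [natDegree_eq_of_degree_eq (degree_eq_degree_of_associated hass)]
    have := natDegree_pow (X - 1 : (ZMod 2)[X]) d
    have h1 : (X - 1 : (ZMod 2)[X]).natDegree = 1 := by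
      simpa using natDegree_X_sub_C (1 : ZMod 2)
    rw [this, h1, mul_one]
  rw [hdeg]
  have h3 : (X - 1 : (ZMod 2)[X])^m ∣ genPoly S ↔ m ≤ d := by
    rw [← pow_dvd_pow_iff hirr.ne_zero hirr.not_unit, ← hass.dvd_iff_dvd_right]
    constructor
    · intro h; exact EuclideanDomain.dvd_gcd (pow_dvd_pow _ hm) h
    · intro h; exact h.trans (EuclideanDomain.gcd_dvd_right _ _)
  rw [h3]
  omega

/-- The sequence with a single one at the position `j` (zero if `j` is out of range). -/
def eAt (N j : ℕ) : Fin N → ZMod 2 := fun i => if (i : ℕ) = j then 1 else 0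

open Polynomial in
lemma aux_genPoly_add {N : ℕ} (S T : Fin N → ZMod 2) :
    genPoly (S + T) = genPoly S + genPoly T := by
  simp [genPoly, add_mul, Finset.sum_add_distrib]

open Polynomial in
lemma aux_genPoly_eAt {N j : ℕ} (hj : j < N) : genPoly (eAt N j) = X^j := by
  unfold genPoly eAt
  rw [Finset.sum_eq_single (⟨j, hj⟩ : Fin N)]
  · simp
  · intro b _ hb
    have : (b : ℕ) ≠ j := fun h => hb (Fin.ext h)
    simp [this]
  · simp

open Polynomial in
lemma aux_genPoly_add_eAt {N j : ℕ} (hj : j < N) (S : Fin N → ZMod 2) :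
    genPoly (S + eAt N j) = genPoly S - X^j := by
  rw [aux_genPoly_add, aux_genPoly_eAt hj, CharTwo.sub_eq_add]

open Polynomial in
lemma aux_coeff {N : ℕ} (S : Fin N → ZMod 2) (i : Fin N) : (genPoly S).coeff i = S i := by
  unfold genPoly
  rw [finset_sum_coeff, Finset.sum_eq_single i]
  · simp
  · intro b _ hb
    have : (i : ℕ) ≠ b := fun h => hb (Fin.ext h.symm)
    simp [coeff_X_pow, this]
  · simp

open Polynomial in
lemma aux_coeff_ge {N : ℕ} (S : Fin N → ZMod 2) (i : ℕ) (hi : N ≤ i) :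
    (genPoly S).coeff i = 0 := by
  unfold genPoly
  rw [finset_sum_coeff]
  apply Finset.sum_eq_zero
  intro b _
  have : i ≠ b := by omega
  simp [coeff_X_pow, this]

open Polynomial in
lemma aux_genPoly_coeff {N : ℕ} (f : (ZMod 2)[X]) (hf : ∀ i, N ≤ i → f.coeff i = 0) :
    genPoly (fun i : Fin N => f.coeff i) = f := by
  ext i
  by_cases h : i < N
  · exact aux_coeff (fun i : Fin N => f.coeff i) ⟨i, h⟩
  · rw [aux_coeff_ge _ _ (by omega), hf _ (by omega)]

lemma aux_genPoly_inj {N : ℕ} : Function.Injective (genPoly (N := N)) := by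
  intro S T h
  funext i
  rw [← aux_coeff S i, h, aux_coeff]

open Polynomial in
lemma aux_card {N m : ℕ} (hm : m ≤ N) :
    {T : Fin N → ZMod 2 | (X - 1 : (ZMod 2)[X])^m ∣ genPoly T}.ncard = 2^(N-m) := by
  have hmon : ((X - 1 : (ZMod 2)[X])^m).Monic := by
    have : (X - 1 : (ZMod 2)[X]).Monic := by simpa using monic_X_sub_C (1 : ZMod 2)
    exact this.pow m
  have hdeg : ((X - 1 : (ZMod 2)[X])^m).natDegree = m := by
    have h1 : (X - 1 : (ZMod 2)[X]).natDegree = 1 := by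
      simpa using natDegree_X_sub_C (1 : ZMod 2)
    rw [natDegree_pow, h1, mul_one]
  set P := (X - 1 : (ZMod 2)[X])^m with hP
  let f : (Fin (N-m) → ZMod 2) → (Fin N → ZMod 2) := fun q i => (P * genPoly q).coeff i
  have hf : ∀ q, genPoly (f q) = P * genPoly q := by
    intro q
    apply aux_genPoly_coeff
    intro i hi
    by_cases h0 : genPoly q = 0
    · simp [h0]
    apply coeff_eq_zero_of_natDegree_lt
    rw [hmon.natDegree_mul' h0, hdeg]
    have : (genPoly q).natDegree < N - m := by
      by_contra hcon
      exact h0 (leadingCoeff_eq_zero.1 (aux_coeff_ge q _ (by omega)))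
    omega
  have hinj : Function.Injective f := by
    intro q q' h
    have h2 := congrArg genPoly h
    rw [hf, hf] at h2
    exact aux_genPoly_inj (mul_left_cancel₀ hmon.ne_zero h2)
  have hset : {T : Fin N → ZMod 2 | P ∣ genPoly T} = Set.range f := by
    ext T
    simp only [Set.mem_setOf_eq, Set.mem_range]
    constructor
    · rintro ⟨g, hg⟩
      refine ⟨fun i => g.coeff i, ?_⟩
      apply aux_genPoly_inj
      rw [hf, hg, aux_genPoly_coeff]
      intro i hi
      by_cases h0 : g = 0
      · simp [h0]
      apply coeff_eq_zero_of_natDegree_lt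
      have h3 : (genPoly T).natDegree = m + g.natDegree := by
        rw [hg, hmon.natDegree_mul' h0, hdeg]
      by_contra hcon
      have h4 : genPoly T = 0 := leadingCoeff_eq_zero.1 (aux_coeff_ge T _ (by omega))
      rw [h4] at hg
      exact (mul_ne_zero hmon.ne_zero h0) hg.symm
    · rintro ⟨q, rfl⟩
      exact ⟨_, hf q⟩
  rw [hset, ← Set.image_univ, Set.ncard_image_of_injective _ hinj, Set.ncard_univ]
  simp [Nat.card_eq_fintype_card]

open Polynomial in
lemma aux_card_diff {N m : ℕ} (hm : m + 1 ≤ N) :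
    {T : Fin N → ZMod 2 | (X - 1 : (ZMod 2)[X])^m ∣ genPoly T ∧
      ¬ (X - 1 : (ZMod 2)[X])^(m+1) ∣ genPoly T}.ncard = 2^(N-m-1) := by
  have h := Set.ncard_diff (s := {T : Fin N → ZMod 2 | (X - 1 : (ZMod 2)[X])^(m+1) ∣ genPoly T})
    (t := {T : Fin N → ZMod 2 | (X - 1 : (ZMod 2)[X])^m ∣ genPoly T})
    (fun T hT => (pow_dvd_pow _ (Nat.le_succ m)).trans hT)
  rw [aux_card hm, aux_card (by omega)] at h
  have e : N - m = (N - m - 1) + 1 := by omega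
  have h2 : 2 ^ (N-m) - 2^(N-(m+1)) = 2^(N-m-1) := by
    rw [show N - (m+1) = N - m - 1 by omega, e, Nat.add_sub_cancel, pow_succ]
    omega
  rw [h2] at h
  exact h

lemma aux_count (M K Z : ℕ) :
    ((Finset.range (M*K)).filter (fun j => Z ≤ j % M)).card = (M - Z) * K := by
  rw [← Nat.count_eq_card_filter_range]
  induction K with
  | zero => simp
  | succ K ih =>
    rw [Nat.mul_succ, Nat.count_add, ih, Nat.mul_succ]
    congr 1
    rw [Nat.count_eq_card_filter_range]
    have : (Finset.range M).filter (fun k => Z ≤ (M * K + k) % M) = Finset.Ico Z M := by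
      ext k
      simp only [Finset.mem_filter, Finset.mem_range, Finset.mem_Ico]
      constructor
      · rintro ⟨h1, h2⟩
        rw [Nat.mul_add_mod, Nat.mod_eq_of_lt h1] at h2
        exact ⟨h2, h1⟩
      · rintro ⟨h1, h2⟩
        rw [Nat.mul_add_mod, Nat.mod_eq_of_lt h2]
        exact ⟨h2, h1⟩
    rw [this, Nat.card_Ico]

open Polynomial in
lemma aux_eval {N : ℕ} (S : Fin N → ZMod 2) : (genPoly S).eval 1 = (wt S : ZMod 2) := by
  unfold genPoly wt
  rw [eval_finset_sum, Finset.card_filter]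
  push_cast
  apply Finset.sum_congr rfl
  intro i _
  simp only [eval_mul, eval_C, eval_pow, eval_X, one_pow, mul_one]
  generalize S i = x
  revert x
  decide

lemma aux_wt_le_one {N : ℕ} (T : Fin N → ZMod 2) :
    wt T ≤ 1 ↔ T = 0 ∨ ∃ j, j < N ∧ T = eAt N j := by
  have hx : ∀ x : ZMod 2, x ≠ 0 → x = 1 := by decide
  constructor
  · intro h
    by_cases h0 : T = 0
    · exact Or.inl h0
    right
    obtain ⟨j, hj⟩ := Function.ne_iff.1 h0
    refine ⟨j, j.2, ?_⟩
    funext i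
    unfold eAt
    split_ifs with hij
    · have : i = j := Fin.ext hij
      rw [this]; exact hx _ hj
    · by_contra hi
      unfold wt at h
      rw [Finset.card_le_one] at h
      have := h i (by simpa using hi) j (by simpa using hj)
      exact hij (by rw [this])
  · rintro (rfl | ⟨j, hj, rfl⟩)
    · simp [wt]
    · unfold wt
      rw [Finset.card_le_one]
      intro a ha b hb
      simp [eAt] at ha hb
      exact Fin.ext (by omega)

lemma aux_sInf_le {A : Set ℕ} (hA : A.Nonempty) (k : ℕ) : sInf A ≤ k ↔ ∃ x ∈ A, x ≤ k :=
  ⟨fun h => ⟨_, Nat.sInf_mem hA, h⟩, fun ⟨_, hx, hk⟩ => (Nat.sInf_le hx).trans hk⟩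

open Polynomial in
lemma aux_zone {n k Z : ℕ} (hk0 : 1 ≤ k) (hk : k ≤ 2^n) (hZ : Z ≤ 2^n)
    (S : Fin (2^n) → ZMod 2) (hS : Odd (wt S)) :
    errLCZone S 1 Z ≤ 2^n - k ↔
      ∃ j, j < Z ∧ (X - 1 : (ZMod 2)[X])^k ∣ genPoly S - X^j := by
  unfold errLCZone
  rw [aux_sInf_le (by exact ⟨_, 0, by simp [wt], by simp, rfl⟩)]
  constructor
  · rintro ⟨x, ⟨T, hT, hTZ, rfl⟩, hx⟩
    rw [aux_linComp hk] at hx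
    rcases (aux_wt_le_one T).1 hT with rfl | ⟨j, hj, rfl⟩
    · exfalso
      rw [add_zero] at hx
      obtain ⟨q, hq⟩ := (dvd_pow_self _ (by omega)).trans hx
      have h1 := congrArg (eval 1) hq
      rw [aux_eval, (ZMod.natCast_eq_one_iff_odd).2 hS] at h1
      simp at h1
    · refine ⟨j, ?_, ?_⟩
      · by_contra hcon
        have := hTZ ⟨j, hj⟩ (by simpa using hcon)
        simp [eAt] at this
      · rwa [aux_genPoly_add_eAt hj] at hx
  · rintro ⟨j, hj, h⟩
    refine ⟨_, ⟨eAt _ j, (aux_wt_le_one _).2 (Or.inr ⟨j, by omega, rfl⟩), ?_, rfl⟩, ?_⟩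
    · intro i hi
      have : (i : ℕ) ≠ j := by omega
      simp [eAt, this]
    · rw [aux_linComp hk, aux_genPoly_add_eAt (by omega)]
      exact h

lemma aux_errLC_eq {n : ℕ} (S : Fin (2^n) → ZMod 2) : errLC S 1 = errLCZone S 1 (2^n) := by
  unfold errLC errLCZone
  congr 1
  ext c
  constructor
  · rintro ⟨T, h, h'⟩
    exact ⟨T, h, fun i hi => absurd i.2 (by omega), h'⟩
  · rintro ⟨T, h, _, h'⟩
    exact ⟨T, h, h'⟩

open Polynomial in
lemma aux_zone_eq {n k Z : ℕ} (hk0 : 1 ≤ k) (hk : k + 1 ≤ 2^n) (hZ : Z ≤ 2^n)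
    (S : Fin (2^n) → ZMod 2) (hS : Odd (wt S)) :
    errLCZone S 1 Z = 2^n - k ↔
      (∃ j, j < Z ∧ (X - 1 : (ZMod 2)[X])^k ∣ genPoly S - X^j) ∧
      ∀ j, j < Z → ¬ (X - 1 : (ZMod 2)[X])^(k+1) ∣ genPoly S - X^j := by
  have h1 := aux_zone hk0 (by omega) hZ S hS
  have h2 := aux_zone (k := k+1) (by omega) hk hZ S hS
  rw [← h1]
  have h3 : (∀ j, j < Z → ¬ (X - 1 : (ZMod 2)[X])^(k+1) ∣ genPoly S - X^j) ↔
      ¬ errLCZone S 1 Z ≤ 2^n - (k+1) := by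
    rw [h2]; push Not; rfl
  rw [h3]
  omega

open Polynomial in
lemma aux_char {n Z s m a : ℕ} (hZ : Z ≤ 2^n) (hsn : s ≤ n)
    (hm1 : 2^(s-1) < m) (hm2 : m < 2^s) (hmN : m + 1 ≤ 2^n) (ha : a < s)
    (haZ : 2^a ≤ Z) (S : Fin (2^n) → ZMod 2) :
    (Odd (wt S) ∧ errLC S 1 = 2^n - m ∧ errLCZone S 1 Z = 2^n - 2^a) ↔
    ∃ j, (j < 2^s ∧ Z ≤ j % 2^(a+1)) ∧ (X - 1 : (ZMod 2)[X])^m ∣ genPoly S - X^j ∧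
      ¬ (X - 1 : (ZMod 2)[X])^(m+1) ∣ genPoly S - X^j := by
  have hsN : 2^s ≤ 2^n := Nat.pow_le_pow_right (by norm_num) hsn
  have ham : 2^a ≤ 2^(s-1) := Nat.pow_le_pow_right (by norm_num) (by omega)
  have ha0 : 1 ≤ 2^a := Nat.one_le_two_pow
  have ha1 : 2^a + 1 ≤ 2^(a+1) := by rw [pow_succ]; omega
  -- transfer of divisibility between congruent positions
  have tr : ∀ {r k i j : ℕ}, k ≤ 2^r → i ≡ j [MOD 2^r] →
      (X - 1 : (ZMod 2)[X])^k ∣ genPoly S - X^i → (X - 1 : (ZMod 2)[X])^k ∣ genPoly S - X^j := by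
    intro r k i j hk hij h
    have := dvd_add h ((pow_dvd_pow _ hk).trans (aux_dvd_of_modEq hij))
    simpa using this
  have df : ∀ {k i j : ℕ}, (X - 1 : (ZMod 2)[X])^k ∣ genPoly S - X^i →
      (X - 1 : (ZMod 2)[X])^k ∣ genPoly S - X^j → (X - 1 : (ZMod 2)[X])^k ∣ X^i - X^j := by
    intro k i j h h'
    simpa using dvd_sub h' h
  constructor
  · rintro ⟨hodd, hL, hLZ⟩
    rw [aux_errLC_eq, aux_zone_eq (by omega) hmN le_rfl S hodd] at hL
    rw [aux_zone_eq ha0 (by omega) hZ S hodd] at hLZ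
    obtain ⟨⟨i, hi, hQ⟩, hmax⟩ := hL
    obtain ⟨-, hZmax⟩ := hLZ
    have hj : i % 2^s < 2^s := Nat.mod_lt _ (by positivity)
    have hQj := tr (r := s) (by omega) (Nat.mod_modEq i (2^s)).symm hQ
    refine ⟨i % 2^s, ⟨hj, ?_⟩, hQj, hmax _ (by omega)⟩
    by_contra hcon
    refine hZmax _ (not_le.1 hcon) ?_
    exact tr ha1 (Nat.mod_modEq _ (2^(a+1))).symm ((pow_dvd_pow _ (by omega)).trans hQj)
  · rintro ⟨j, ⟨hj, hjZ⟩, hQ, hnQ⟩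
    have hodd : Odd (wt S) := by
      obtain ⟨q, hq⟩ := (dvd_pow_self _ (by omega)).trans hQ
      have h1 := congrArg (eval 1) hq
      rw [eval_sub, aux_eval] at h1
      simp at h1
      rw [← ZMod.natCast_eq_one_iff_odd]
      exact sub_eq_zero.1 h1
    refine ⟨hodd, ?_, ?_⟩
    · rw [aux_errLC_eq, aux_zone_eq (by omega) hmN le_rfl S hodd]
      refine ⟨⟨j, by omega, hQ⟩, ?_⟩
      intro i _ hi
      have h1 := df ((pow_dvd_pow _ (Nat.le_succ m)).trans hi) hQ
      have h2 : i ≡ j [MOD 2^s] := aux_modEq_of_dvd (fun v hv => by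
        have : 2^v ≤ 2^(s-1) := Nat.pow_le_pow_right (by norm_num) (by omega)
        omega) h1
      exact hnQ (tr (by omega) h2 hi)
    · rw [aux_zone_eq ha0 (by omega) hZ S hodd]
      constructor
      · have : j % 2^a < 2^a := Nat.mod_lt _ (by positivity)
        refine ⟨j % 2^a, by omega, ?_⟩
        exact tr le_rfl (Nat.mod_modEq _ (2^a)).symm ((pow_dvd_pow _ (by omega)).trans hQ)
      · intro i hi hQi
        have h1 := df hQi ((pow_dvd_pow _ (by omega)).trans hQ)
        have h2 : i ≡ j [MOD 2^(a+1)] := aux_modEq_of_dvd (fun v hv => by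
          have : 2^v ≤ 2^a := Nat.pow_le_pow_right (by norm_num) (by omega)
          omega) h1
        have h3 : i % 2^(a+1) = j % 2^(a+1) := h2
        have := Nat.mod_le i (2^(a+1))
        omega

/-- Case `s > a`: exactly `2^{c-1+s} - Z · 2^{c+s-a-2}` odd-weight sequences with
`L_1(S) = c` satisfy `L_{1;Z}(S) = 2^n - 2^a`. -/
theorem stmt12 (n Z s c : ℕ) (hn : 4 ≤ n) (hZ0 : 0 < Z) (hZ : Z ≤ 2^n)
    (h1 : 2^n - 2^s < c) (h2 : c < 2^n - 2^(s-1)) (hsa : Nat.log 2 Z < s) :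
    {S : Fin (2^n) → ZMod 2 | Odd (wt S) ∧ errLC S 1 = c ∧
      errLCZone S 1 Z = 2^n - 2^(Nat.log 2 Z)}.ncard
      = 2^(c - 1 + s) - Z * 2^(c + s - Nat.log 2 Z - 2) := by
  have hsn : s ≤ n := by
    by_contra hcon
    have : 2^n ≤ 2^(s-1) := Nat.pow_le_pow_right (by norm_num) (by omega)
    omega
  have hsN : 2^s ≤ 2^n := Nat.pow_le_pow_right (by norm_num) hsn
  have haZ : 2^(Nat.log 2 Z) ≤ Z := Nat.pow_log_le_self 2 (by omega)
  have hZa : Z < 2^(Nat.log 2 Z + 1) := Nat.lt_pow_succ_log_self (by norm_num) Z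
  generalize Nat.log 2 Z = a at *
  obtain ⟨m, hm⟩ : ∃ m, m = 2^n - c := ⟨_, rfl⟩
  have hk0 : 0 < 2^(s-1) := by positivity
  have hc : c = 2^n - m := by omega
  have hm1 : 2^(s-1) < m := by omega
  have hm2 : m < 2^s := by omega
  have hmN : m + 1 ≤ 2^n := by omega
  have hc1 : 1 ≤ c := by omega
  let J : Finset ℕ := (Finset.range (2^s)).filter (fun j => Z ≤ j % 2^(a+1))
  let A : Set (Fin (2^n) → ZMod 2) :=
    {T | (Polynomial.X - 1 : Polynomial (ZMod 2))^m ∣ genPoly T ∧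
      ¬ (Polynomial.X - 1 : Polynomial (ZMod 2))^(m+1) ∣ genPoly T}
  have hAcard : A.ncard = 2^(c-1) := by
    have := aux_card_diff hmN
    rw [← hc] at this
    exact this
  let f : ℕ × (Fin (2^n) → ZMod 2) → (Fin (2^n) → ZMod 2) := fun p => p.2 + eAt _ p.1
  have hee : ∀ j, eAt (2^n) j + eAt (2^n) j = 0 := fun j => by
    funext i
    exact CharTwo.add_self_eq_zero _
  have hset : {S : Fin (2^n) → ZMod 2 | Odd (wt S) ∧ errLC S 1 = c ∧
      errLCZone S 1 Z = 2^n - 2^a} = f '' ((J : Set ℕ) ×ˢ A) := by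
    ext S
    rw [Set.mem_setOf_eq, hc, aux_char hZ hsn hm1 hm2 hmN hsa haZ]
    constructor
    · rintro ⟨j, ⟨hj, hjZ⟩, h, h'⟩
      refine ⟨(j, S + eAt _ j), ⟨?_, ?_⟩, ?_⟩
      · simp [J, hj, hjZ]
      · simp only [A, Set.mem_setOf_eq]
        rw [aux_genPoly_add_eAt (by omega)]
        exact ⟨h, h'⟩
      · simp only [f]
        rw [add_assoc, hee, add_zero]
    · rintro ⟨⟨j, T⟩, ⟨hj, hT⟩, rfl⟩
      simp only [J, Finset.coe_filter, Finset.mem_range, Set.mem_setOf_eq] at hj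
      refine ⟨j, hj, ?_⟩
      simp only [f]
      rw [← aux_genPoly_add_eAt (by omega), add_assoc, hee, add_zero]
      exact hT
  have hinj : Set.InjOn f ((J : Set ℕ) ×ˢ A) := by
    rintro ⟨i, T⟩ ⟨hi, hT⟩ ⟨j, U⟩ ⟨hj, hU⟩ h
    simp only [J, Finset.coe_filter, Finset.mem_range, Set.mem_setOf_eq] at hi hj
    simp only [f] at h
    have h1 := congrArg genPoly h
    rw [aux_genPoly_add_eAt (by omega), aux_genPoly_add_eAt (by omega)] at h1
    have h2 : (Polynomial.X - 1 : Polynomial (ZMod 2))^m ∣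
        Polynomial.X^i - Polynomial.X^j := by
      have e : (Polynomial.X^i - Polynomial.X^j : Polynomial (ZMod 2)) =
          genPoly T - genPoly U := by linear_combination -h1
      rw [e]
      exact dvd_sub hT.1 hU.1
    have h3 : i ≡ j [MOD 2^s] := aux_modEq_of_dvd (fun v hv => by
        have : 2^v ≤ 2^(s-1) := Nat.pow_le_pow_right (by norm_num) (by omega)
        omega) h2
    have h4 : i = j := Nat.ModEq.eq_of_lt_of_lt h3 hi.1 hj.1
    subst h4
    have h5 : T = U := add_right_cancel h
    rw [h5]
  have hJ : J.card = (2^(a+1) - Z) * 2^(s-a-1) := by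
    have := aux_count (2^(a+1)) (2^(s-a-1)) Z
    rw [← pow_add, show a + 1 + (s-a-1) = s by omega] at this
    exact this
  rw [hset, Set.ncard_image_of_injOn hinj, Set.ncard_prod, Set.ncard_coe_finset, hJ, hAcard,
    Nat.sub_mul, Nat.sub_mul, ← pow_add, ← pow_add]
  have e1 : a + 1 + (s - a - 1) + (c - 1) = c - 1 + s := by omega
  have e2 : s - a - 1 + (c - 1) = c + s - a - 2 := by omega
  rw [e1, mul_assoc, ← pow_add, e2]
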